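/- Let p ≥ 1 be an integer and let z, z' ∈ ℍ = {w ∈ ℂ : Im w > 0}. Then c_p · ∫_{ℍ} (z − conj(w))^{−2p} · (w − conj(z'))^{−2p} · (Im w)^{2p−2} dA(w) = (z − conj(z'))^{−2p}, where c_p = (−1)^p · 2^{2p−2} · (2p−1) / π. -/

import Mathlib

open MeasureTheory
open scoped Real

/-!
For fixed `z` in the upper half-plane, the Möbius map `ζ ↦ (z - conj z * ζ) / (1 - ζ)` sends the
unit disk onto the upper half-plane and `0` to `z`. Changing variables along it, the conjugate
factors of the kernel `(z - conj w)⁻ⁿ`, of `(Im w) ^ (n - 2)` and of the Jacobian cancel, so that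
`(z - conj w)⁻ⁿ (Im w) ^ (n - 2) f(w) dA(w)` becomes, up to a constant, the radial weight
`(1 - |ζ|²) ^ (n - 2)` times `(1 - ζ)⁻ⁿ f(w(ζ)) dA(ζ)`. If `f` is holomorphic, so is the last
function, and integrating its mean value property over the radii gives its value `f(z)` at `0`
times a constant.

The reproducing identity is the case `f(w) = (w - conj z')⁻ⁿ`, where `(1 - ζ)⁻ⁿ f(w(ζ))` extends
continuously to the closed disk, so that all integrals converge.
-/

open Complex Metric Set
open scoped ComplexConjugate

section PolarCoordinates

variable {E : Type*} [NormedAddCommGroup E] [NormedSpace ℝ E] {f : ℂ → E}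

lemma integrableOn_smul_comp_polarCoord_symm :
    IntegrableOn (fun q : ℝ × ℝ => q.1 • f (Complex.polarCoord.symm q)) polarCoord.target ↔
      Integrable f := by
  have hJacobian := integrableOn_image_iff_integrableOn_abs_det_fderiv_smul volume
    polarCoord.open_target.measurableSet
    (fun q _ => (hasFDerivAt_polarCoord_symm q).hasFDerivWithinAt) polarCoord.symm.injOn
    (fun q => f (measurableEquivRealProd.symm q))
  rw [polarCoord.symm_image_target_eq_source, IntegrableOn,
    Measure.restrict_congr_set polarCoord_source_ae_eq_univ, Measure.restrict_univ] at hJacobian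
  rw [← volume_preserving_equiv_real_prod.symm.integrable_comp_emb
    measurableEquivRealProd.symm.measurableEmbedding, Function.comp_def, hJacobian]
  refine integrableOn_congr_fun (fun q hq => ?_) polarCoord.open_target.measurableSet
  rw [det_fderivPolarCoordSymm, abs_of_pos hq.1,
    measurableEquivRealProd_symm_polarCoord_symm_apply]

lemma circleAverage_eq_setIntegral_Ioo (f : ℂ → E) (c : ℂ) (r : ℝ) :
    Real.circleAverage f c r = (2 * π)⁻¹ • ∫ θ in Ioo (-π) π, f (circleMap c r θ) := by
  rw [Real.circleAverage_eq_integral_add (-π), ← integral_Ioc_eq_integral_Ioo,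
    ← intervalIntegral.integral_of_le (by linarith [Real.pi_pos]),
    intervalIntegral.integral_comp_add_right (fun θ => f (circleMap c r θ))]
  ring_nf

lemma integral_eq_integral_circleAverage (hf : Integrable f) (c : ℂ) :
    ∫ ζ, f ζ = ∫ r in Ioi (0 : ℝ), (2 * π * r) • Real.circleAverage f c r := by
  have hcircle (r θ : ℝ) : c + Complex.polarCoord.symm (r, θ) = circleMap c r θ := by
    simp [circleMap, exp_mul_I]
  calc ∫ ζ, f ζ = ∫ q in Ioi (0 : ℝ) ×ˢ Ioo (-π) π, q.1 • f (c + Complex.polarCoord.symm q) := by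
        rw [← integral_add_left_eq_self f c, ← Complex.integral_comp_polarCoord_symm]
        rfl
    _ = ∫ r in Ioi (0 : ℝ), ∫ θ in Ioo (-π) π, r • f (circleMap c r θ) := by
        simp only [← hcircle]
        exact setIntegral_prod _ (integrableOn_smul_comp_polarCoord_symm.2 (hf.comp_add_left c))
    _ = ∫ r in Ioi (0 : ℝ), (2 * π * r) • Real.circleAverage f c r := by
        congr 1 with r
        rw [integral_smul, circleAverage_eq_setIntegral_Ioo, smul_smul]
        congr 1
        field_simp

end PolarCoordinates

section RadialWeights

lemma setIntegral_ball_radial_smul_of_differentiableOn {E : Type*} [NormedAddCommGroup E]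
    [NormedSpace ℂ E] [CompleteSpace E] {φ : ℝ → ℝ} {f : ℂ → E} {c : ℂ} {R : ℝ}
    (hf : DifferentiableOn ℂ f (ball c R))
    (hint : IntegrableOn (fun ζ => φ ‖ζ - c‖ • f ζ) (ball c R)) :
    ∫ ζ in ball c R, φ ‖ζ - c‖ • f ζ = (∫ r in Ioo 0 R, 2 * π * r * φ r) • f c := by
  have hmean {r : ℝ} (hr : r ∈ Ioo 0 R) : Real.circleAverage f c r = f c :=
    DiffContOnCl.circleAverage <| (hf.mono <| closure_ball_subset_closedBall.trans <|
      closedBall_subset_ball <| (abs_of_pos hr.1).trans_lt hr.2).diffContOnCl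
  have haverage {r : ℝ} (hr : 0 < r) :
      Real.circleAverage ((ball c R).indicator fun ζ => φ ‖ζ - c‖ • f ζ) c r =
        (Iio R).indicator φ r • f c := by
    rw [Real.circleAverage_congr_sphere (f₂ := (Iio R).indicator φ r • f), Real.circleAverage_smul]
    · by_cases hrR : r < R
      · rw [hmean ⟨hr, hrR⟩]
      · simp [hrR]
    · intro ζ hζ
      have hζr : ‖ζ - c‖ = r := by simpa [dist_eq_norm, abs_of_pos hr] using hζ
      by_cases hrR : r < R <;> simp [indicator, dist_eq_norm, hζr, hrR]
  rw [← integral_indicator measurableSet_ball,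
    integral_eq_integral_circleAverage (hint.integrable_indicator measurableSet_ball) c,
    ← integral_smul_const, ← Ioi_inter_Iio, ← setIntegral_indicator measurableSet_Iio]
  refine setIntegral_congr_fun measurableSet_Ioi fun r hr => ?_
  by_cases hrR : r < R <;> simp [haverage hr, hrR, smul_smul]

lemma integral_mul_one_sub_sq_pow (k : ℕ) :
    ∫ r in Ioo (0 : ℝ) 1, 2 * π * r * (1 - r ^ 2) ^ k = π / (k + 1) := by
  have hderiv (r : ℝ) : HasDerivAt (fun t : ℝ => -(π / (k + 1)) * (1 - t ^ 2) ^ (k + 1))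
      (2 * π * r * (1 - r ^ 2) ^ k) r := by
    refine ((((hasDerivAt_pow 2 r).const_sub 1).pow (k + 1)).const_mul _).congr_deriv ?_
    push_cast
    field_simp
  rw [← integral_Ioc_eq_integral_Ioo, ← intervalIntegral.integral_of_le zero_le_one,
    intervalIntegral.integral_eq_sub_of_hasDerivAt (fun r _ => hderiv r)
      (Continuous.intervalIntegrable (by fun_prop) _ _)]
  simp

end RadialWeights

section HolomorphicChangeOfVariables

variable {E : Type*} [NormedAddCommGroup E] [NormedSpace ℝ E] {s : Set ℂ} {ψ ψ' : ℂ → ℂ}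

lemma det_restrictScalars_toSpanSingleton (a : ℂ) :
    ((ContinuousLinearMap.toSpanSingleton ℂ a).restrictScalars ℝ).det = ‖a‖ ^ 2 := by
  simp [ContinuousLinearMap.det, LinearMap.det_restrictScalars, Algebra.norm_complex_eq,
    normSq_eq_norm_sq]

lemma integrableOn_image_iff_integrableOn_norm_deriv_sq_smul (hs : MeasurableSet s)
    (hψ' : ∀ ζ ∈ s, HasDerivWithinAt ψ (ψ' ζ) s ζ) (hψ : InjOn ψ s) (g : ℂ → E) :
    IntegrableOn g (ψ '' s) ↔ IntegrableOn (fun ζ => ‖ψ' ζ‖ ^ 2 • g (ψ ζ)) s := by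
  simpa [det_restrictScalars_toSpanSingleton] using
    integrableOn_image_iff_integrableOn_abs_det_fderiv_smul volume hs
      (fun ζ hζ => (hψ' ζ hζ).hasFDerivWithinAt.restrictScalars ℝ) hψ g

lemma integral_image_eq_integral_norm_deriv_sq_smul (hs : MeasurableSet s)
    (hψ' : ∀ ζ ∈ s, HasDerivWithinAt ψ (ψ' ζ) s ζ) (hψ : InjOn ψ s) (g : ℂ → E) :
    ∫ w in ψ '' s, g w = ∫ ζ in s, ‖ψ' ζ‖ ^ 2 • g (ψ ζ) := by
  simpa [det_restrictScalars_toSpanSingleton] using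
    integral_image_eq_integral_abs_det_fderiv_smul volume hs
      (fun ζ hζ => (hψ' ζ hζ).hasFDerivWithinAt.restrictScalars ℝ) hψ g

end HolomorphicChangeOfVariables

section DiskToHalfPlane

variable {z w ζ : ℂ}

/-- The inverse Cayley transform centred at `z`: for `0 < z.im` it maps the open unit disk
biholomorphically onto the upper half-plane and `0` to `z`. The value at the pole `ζ = 1` is
junk. -/
noncomputable def diskToHalfPlane (z ζ : ℂ) : ℂ := (z - conj z * ζ) / (1 - ζ)

lemma norm_sub_lt_norm_sub_conj (hz : 0 < z.im) (hw : 0 < w.im) : ‖w - z‖ < ‖w - conj z‖ := by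
  rw [← sq_lt_sq₀ (norm_nonneg _) (norm_nonneg _), ← normSq_eq_norm_sq, ← normSq_eq_norm_sq,
    normSq_apply, normSq_apply]
  simp only [sub_re, sub_im, conj_re, conj_im]
  nlinarith [mul_pos hz hw]

lemma sub_conj_ne_zero_of_im_pos (hz : 0 < z.im) (hw : 0 < w.im) : w - conj z ≠ 0 :=
  norm_pos_iff.1 ((norm_nonneg _).trans_lt (norm_sub_lt_norm_sub_conj hz hw))

lemma one_sub_ne_zero_of_mem_ball (hζ : ζ ∈ ball 0 1) : 1 - ζ ≠ 0 := by
  intro h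
  simp [← sub_eq_zero.1 h] at hζ

@[simp]
lemma diskToHalfPlane_zero (z : ℂ) : diskToHalfPlane z 0 = z := by
  simp [diskToHalfPlane]

lemma one_sub_mul_diskToHalfPlane_sub (hζ : 1 - ζ ≠ 0) (z a : ℂ) :
    (1 - ζ) * (diskToHalfPlane z ζ - a) = (z - a) - (conj z - a) * ζ := by
  rw [diskToHalfPlane]
  field_simp
  ring

lemma diskToHalfPlane_sub_conj (hζ : 1 - ζ ≠ 0) (z : ℂ) :
    diskToHalfPlane z ζ - conj z = (z - conj z) / (1 - ζ) := by
  rw [eq_div_iff hζ, mul_comm, one_sub_mul_diskToHalfPlane_sub hζ, sub_self, zero_mul, sub_zero]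

lemma sub_conj_diskToHalfPlane (hζ : 1 - ζ ≠ 0) (z : ℂ) :
    z - conj (diskToHalfPlane z ζ) = (z - conj z) / (1 - conj ζ) := by
  have h := congrArg conj (diskToHalfPlane_sub_conj hζ z)
  simp only [map_sub, map_div₀, map_one, conj_conj] at h
  rw [← neg_sub, h, ← neg_div, neg_sub]

lemma diskToHalfPlane_im (hζ : 1 - ζ ≠ 0) (z : ℂ) :
    (diskToHalfPlane z ζ).im = z.im * (1 - ‖ζ‖ ^ 2) / ‖1 - ζ‖ ^ 2 := by
  have hnormSq : normSq (1 - ζ) ≠ 0 := by simpa using hζ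
  rw [← normSq_eq_norm_sq, ← normSq_eq_norm_sq, diskToHalfPlane, div_im]
  field_simp
  simp only [normSq_apply, sub_re, sub_im, mul_re, mul_im, conj_re, conj_im, one_re, one_im]
  ring

lemma hasDerivAt_diskToHalfPlane (hζ : 1 - ζ ≠ 0) (z : ℂ) :
    HasDerivAt (diskToHalfPlane z) ((z - conj z) / (1 - ζ) ^ 2) ζ := by
  refine ((((hasDerivAt_id ζ).const_mul (conj z)).const_sub z).div
    ((hasDerivAt_id ζ).const_sub 1) hζ).congr_deriv ?_
  simp only [id]
  ring

lemma mapsTo_diskToHalfPlane (hz : 0 < z.im) :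
    MapsTo (diskToHalfPlane z) (ball 0 1) {w | 0 < w.im} := by
  intro ζ hζ
  have h1 := one_sub_ne_zero_of_mem_ball hζ
  have hnorm : 0 < 1 - ‖ζ‖ ^ 2 := by
    nlinarith [norm_nonneg ζ, mem_ball_zero_iff.1 hζ]
  rw [mem_ofPred_eq, diskToHalfPlane_im h1]
  positivity

lemma injOn_diskToHalfPlane (hz : 0 < z.im) : InjOn (diskToHalfPlane z) (ball 0 1) := by
  intro ζ hζ ξ hξ h
  have hdiv := diskToHalfPlane_sub_conj (one_sub_ne_zero_of_mem_ball hζ) z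
  rw [h, diskToHalfPlane_sub_conj (one_sub_ne_zero_of_mem_ball hξ), div_eq_mul_inv,
    div_eq_mul_inv] at hdiv
  have hinv := mul_left_cancel₀ (sub_conj_ne_zero_of_im_pos hz hz) hdiv
  exact (sub_right_injective (inv_injective hinv)).symm

lemma surjOn_diskToHalfPlane (hz : 0 < z.im) :
    SurjOn (diskToHalfPlane z) (ball 0 1) {w | 0 < w.im} := by
  intro w hw
  have hz0 := sub_conj_ne_zero_of_im_pos hz hz
  have hw0 := sub_conj_ne_zero_of_im_pos hz hw
  refine ⟨(w - z) / (w - conj z), ?_, ?_⟩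
  · rw [mem_ball_zero_iff, norm_div, div_lt_one (norm_pos_iff.2 hw0)]
    exact norm_sub_lt_norm_sub_conj hz hw
  · have hsub : 1 - (w - z) / (w - conj z) = (z - conj z) / (w - conj z) := by
      field_simp
      ring
    rw [diskToHalfPlane, hsub]
    field_simp
    ring

lemma image_diskToHalfPlane (hz : 0 < z.im) :
    diskToHalfPlane z '' ball 0 1 = {w | 0 < w.im} :=
  (surjOn_diskToHalfPlane hz).image_eq_of_mapsTo (mapsTo_diskToHalfPlane hz)

end DiskToHalfPlane

section BergmanKernel

variable {E : Type*} [NormedAddCommGroup E] [NormedSpace ℂ E] {f : ℂ → E} {z z' ζ : ℂ}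

/-- The Bergman kernel of weight `k + 2` on the upper half-plane, without its normalising constant,
multiplied by the density `(Im w) ^ k` against which it is integrated. The weight is written
`k + 2` so that no truncated subtraction occurs. -/
noncomputable def weightedBergmanKernel (k : ℕ) (z w : ℂ) : ℂ :=
  ((z - conj w) ^ (k + 2))⁻¹ * (w.im : ℂ) ^ k

/-- The weight `n` pullback of a function on the upper half-plane to the unit disk along
`diskToHalfPlane z`. It carries the automorphy factor `(1 - ζ)⁻ⁿ`, and the normalisation is such
that its value at `0` is `f z`. -/
noncomputable def diskPullback (n : ℕ) (z : ℂ) (f : ℂ → E) (ζ : ℂ) : E :=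
  ((1 - ζ) ^ n)⁻¹ • f (diskToHalfPlane z ζ)

@[simp]
lemma diskPullback_zero (n : ℕ) (z : ℂ) (f : ℂ → E) : diskPullback n z f 0 = f z := by
  simp [diskPullback]

lemma diskPullback_inv_pow_sub (n : ℕ) (z a : ℂ) (hζ : 1 - ζ ≠ 0) :
    diskPullback n z (fun w => ((w - a) ^ n)⁻¹) ζ = (((z - a) - (conj z - a) * ζ) ^ n)⁻¹ := by
  rw [diskPullback, smul_eq_mul, ← mul_inv, ← mul_pow, one_sub_mul_diskToHalfPlane_sub hζ]

lemma differentiableOn_diskPullback (n : ℕ) (hz : 0 < z.im)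
    (hf : DifferentiableOn ℂ f {w | 0 < w.im}) :
    DifferentiableOn ℂ (diskPullback n z f) (ball 0 1) := by
  refine DifferentiableOn.smul (DifferentiableOn.inv (by fun_prop) fun ζ hζ =>
    pow_ne_zero n (one_sub_ne_zero_of_mem_ball hζ)) ?_
  exact hf.comp (fun ζ hζ => (hasDerivAt_diskToHalfPlane (one_sub_ne_zero_of_mem_ball hζ)
    z).differentiableAt.differentiableWithinAt) (mapsTo_diskToHalfPlane hz)

lemma jacobian_mul_weightedBergmanKernel (k : ℕ) (hz : 0 < z.im) (hζ : 1 - ζ ≠ 0) :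
    (‖(z - conj z) / (1 - ζ) ^ 2‖ : ℂ) ^ 2 * weightedBergmanKernel k z (diskToHalfPlane z ζ) =
      4 / (2 * I) ^ (k + 2) * ((1 - ‖ζ‖ ^ 2) ^ k * ((1 - ζ) ^ (k + 2))⁻¹) := by
  have hz0 : (z.im : ℂ) ≠ 0 := by exact_mod_cast hz.ne'
  have hζ' : 1 - conj ζ ≠ 0 := by simpa using (map_ne_zero conj).2 hζ
  have hzc : z - conj z = 2 * I * z.im := by rw [sub_conj]; push_cast; ring
  have hnorm : (‖1 - ζ‖ : ℂ) ^ 2 = (1 - ζ) * (1 - conj ζ) := by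
    simpa using (mul_conj' (1 - ζ)).symm
  have hjacobian : (‖(z - conj z) / (1 - ζ) ^ 2‖ : ℂ) ^ 2 =
      4 * z.im ^ 2 / ((1 - ζ) * (1 - conj ζ)) ^ 2 := by
    rw [← hnorm, hzc]
    simp only [Complex.norm_div, Complex.norm_mul, norm_ofNat, norm_I, mul_one, norm_real,
      Real.norm_eq_abs, abs_of_pos hz, norm_pow, ofReal_div, ofReal_mul, ofReal_ofNat, ofReal_pow]
    ring
  rw [hjacobian, weightedBergmanKernel, sub_conj_diskToHalfPlane hζ, hzc, diskToHalfPlane_im hζ]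
  push_cast
  rw [hnorm]
  simp only [div_pow, mul_pow, pow_add]
  have hI := I_ne_zero
  field_simp

lemma jacobian_smul_weightedBergmanKernel_smul (k : ℕ) (hz : 0 < z.im) (hζ : ζ ∈ ball 0 1)
    (f : ℂ → E) :
    ‖(z - conj z) / (1 - ζ) ^ 2‖ ^ 2 •
        weightedBergmanKernel k z (diskToHalfPlane z ζ) • f (diskToHalfPlane z ζ) =
      (4 / (2 * I) ^ (k + 2)) • (1 - ‖ζ‖ ^ 2) ^ k • diskPullback (k + 2) z f ζ := by
  have h := jacobian_mul_weightedBergmanKernel k hz (one_sub_ne_zero_of_mem_ball hζ)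
  rw [diskPullback, ← coe_smul, ← coe_smul, smul_smul, smul_smul, smul_smul]
  push_cast
  rw [h, mul_assoc]

lemma integrableOn_weightedBergmanKernel_smul_iff (k : ℕ) (hz : 0 < z.im) :
    IntegrableOn (fun w => weightedBergmanKernel k z w • f w) {w | 0 < w.im} ↔
      IntegrableOn (fun ζ => (1 - ‖ζ‖ ^ 2) ^ k • diskPullback (k + 2) z f ζ) (ball 0 1) := by
  have hc : 4 / (2 * I) ^ (k + 2) ≠ 0 := by simp
  rw [← image_diskToHalfPlane hz,
    integrableOn_image_iff_integrableOn_norm_deriv_sq_smul measurableSet_ball (fun ζ hζ =>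
      (hasDerivAt_diskToHalfPlane (one_sub_ne_zero_of_mem_ball hζ) z).hasDerivWithinAt)
      (injOn_diskToHalfPlane hz),
    integrableOn_congr_fun (fun ζ hζ => jacobian_smul_weightedBergmanKernel_smul k hz hζ f)
      measurableSet_ball]
  exact integrable_fun_smul_iff hc _

lemma setIntegral_weightedBergmanKernel_smul (k : ℕ) (hz : 0 < z.im) (f : ℂ → E) :
    ∫ w in {w | 0 < w.im}, weightedBergmanKernel k z w • f w =
      (4 / (2 * I) ^ (k + 2)) •
        ∫ ζ in ball (0 : ℂ) 1, (1 - ‖ζ‖ ^ 2) ^ k • diskPullback (k + 2) z f ζ := by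
  rw [← image_diskToHalfPlane hz,
    integral_image_eq_integral_norm_deriv_sq_smul measurableSet_ball (fun ζ hζ =>
      (hasDerivAt_diskToHalfPlane (one_sub_ne_zero_of_mem_ball hζ) z).hasDerivWithinAt)
      (injOn_diskToHalfPlane hz),
    setIntegral_congr_fun measurableSet_ball
      (fun ζ hζ => jacobian_smul_weightedBergmanKernel_smul k hz hζ f), integral_smul]

theorem setIntegral_weightedBergmanKernel_smul_of_differentiableOn [CompleteSpace E] (k : ℕ)
    (hz : 0 < z.im) (hf : DifferentiableOn ℂ f {w | 0 < w.im})
    (hint : IntegrableOn (fun w => weightedBergmanKernel k z w • f w) {w | 0 < w.im}) :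
    ∫ w in {w | 0 < w.im}, weightedBergmanKernel k z w • f w =
      (4 * π / ((k + 1) * (2 * I) ^ (k + 2))) • f z := by
  have hball := setIntegral_ball_radial_smul_of_differentiableOn (φ := fun r => (1 - r ^ 2) ^ k)
    (differentiableOn_diskPullback (k + 2) hz hf)
    (by simpa using (integrableOn_weightedBergmanKernel_smul_iff k hz).1 hint)
  simp only [sub_zero] at hball
  rw [setIntegral_weightedBergmanKernel_smul k hz, hball, integral_mul_one_sub_sq_pow, ← coe_smul,
    smul_smul, diskPullback_zero]
  congr 1
  push_cast
  field_simp

lemma sub_conj_sub_mul_ne_zero (hz : 0 < z.im) (hz' : 0 < z'.im) (hζ : ζ ∈ closedBall 0 1) :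
    (z - conj z') - (conj z - conj z') * ζ ≠ 0 := by
  intro h
  have hlt : ‖conj z - conj z'‖ < ‖z - conj z'‖ := by
    rw [← map_sub, norm_conj]
    exact norm_sub_lt_norm_sub_conj hz' hz
  rw [sub_eq_zero.1 h, norm_mul] at hlt
  exact hlt.not_ge (mul_le_of_le_one_right (norm_nonneg _) (mem_closedBall_zero_iff.1 hζ))

lemma integrableOn_weightedBergmanKernel_smul_inv_pow (k : ℕ) (hz : 0 < z.im) (hz' : 0 < z'.im) :
    IntegrableOn (fun w => weightedBergmanKernel k z w • ((w - conj z') ^ (k + 2))⁻¹)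
      {w | 0 < w.im} := by
  rw [integrableOn_weightedBergmanKernel_smul_iff k hz,
    integrableOn_congr_fun (fun ζ hζ => by
      rw [diskPullback_inv_pow_sub _ _ _ (one_sub_ne_zero_of_mem_ball hζ)]) measurableSet_ball]
  refine (ContinuousOn.integrableOn_compact (isCompact_closedBall 0 1) ?_).mono_set
    ball_subset_closedBall
  have hweight : Continuous fun ζ : ℂ => (1 - ‖ζ‖ ^ 2) ^ k := by fun_prop
  exact hweight.continuousOn.smul (ContinuousOn.inv₀ (by fun_prop) fun ζ hζ =>
    pow_ne_zero _ (sub_conj_sub_mul_ne_zero hz hz' hζ))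

end BergmanKernel

theorem stmt_11_general (n : ℕ) (hn : 2 ≤ n) (z z' : ℂ) (hz : 0 < z.im) (hz' : 0 < z'.im) :
    ((n - 1 : ℂ) * (2 * I) ^ n / (4 * π)) *
      ∫ w in {w : ℂ | 0 < w.im},
        ((z - conj w) ^ n)⁻¹ * ((w - conj z') ^ n)⁻¹ * (w.im : ℂ) ^ (n - 2)
      = ((z - conj z') ^ n)⁻¹ := by
  obtain ⟨k, rfl⟩ := Nat.exists_eq_add_of_le' hn
  have hf : DifferentiableOn ℂ (fun w => ((w - conj z') ^ (k + 2))⁻¹) {w | 0 < w.im} :=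
    DifferentiableOn.inv (by fun_prop) fun w hw =>
      pow_ne_zero _ (sub_conj_ne_zero_of_im_pos hz' hw)
  have hreproducing := setIntegral_weightedBergmanKernel_smul_of_differentiableOn k hz hf
    (integrableOn_weightedBergmanKernel_smul_inv_pow k hz hz')
  simp only [weightedBergmanKernel, smul_eq_mul] at hreproducing
  simp only [mul_right_comm _ _ ((_ : ℂ) ^ k), Nat.add_sub_cancel, hreproducing]
  have hk : (k : ℂ) + 1 ≠ 0 := by exact_mod_cast k.succ_ne_zero
  have hπ : (π : ℂ) ≠ 0 := by exact_mod_cast Real.pi_ne_zero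
  push_cast
  rw [show (k : ℂ) + 2 - 1 = k + 1 by ring]
  field_simp

/-- Self-reproducing identity for the explicit Bergman kernel of the weighted Bergman
space of weight `2p` on the upper half-plane:
`c_p ∫_ℍ (z - conj w)^{-2p} (w - conj z')^{-2p} (Im w)^{2p-2} dA(w) = (z - conj z')^{-2p}`,
where `c_p = (-1)^p 2^{2p-2} (2p-1) / π`. -/
theorem stmt_11 (p : ℕ) (hp : 1 ≤ p) (z z' : ℂ) (hz : 0 < z.im) (hz' : 0 < z'.im) :
    ((-1 : ℂ) ^ p * 2 ^ (2 * p - 2) * (2 * (p : ℂ) - 1) / (π : ℂ)) *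
      ∫ w in {w : ℂ | 0 < w.im},
        ((z - (starRingEnd ℂ) w) ^ (2 * p))⁻¹ * ((w - (starRingEnd ℂ) z') ^ (2 * p))⁻¹ *
          ((w.im : ℂ)) ^ (2 * p - 2)
      = ((z - (starRingEnd ℂ) z') ^ (2 * p))⁻¹ := by
  rw [← stmt_11_general (2 * p) (by omega) z z' hz hz', mul_pow 2 I, pow_mul I, I_sq,
    pow_sub₀ 2 two_ne_zero (by omega)]
  push_cast
  ring
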